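/- arXiv:1206.4541 — 3 statements merged into one kernel-verified Lean document; each statement's English description precedes it below -/
import Mathlib

section
/- Let c > 0 and χ be real numbers with χ > c², and suppose k₀ > 2, where k₀ is the largest integer k ≥ 1 with 2k·(2k+1) < χ − c². Then σ₂ · σ₃ · ⋯ · σ_{k₀−1} > g(0)^{−4} · exp( ∫_0^{√(χ − c²)/2} log(g(x)) dx ). -/
open Real

/-- The function `g(x)` from the paper, built from `c` and `χ`. -/
noncomputable def gFun (c χ x : ℝ) : ℝ :=
  1 + 2 * ((χ - c ^ 2) / c ^ 2 - (2 * x / c) ^ 2) +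
    Real.sqrt ((1 + 2 * ((χ - c ^ 2) / c ^ 2 - (2 * x / c) ^ 2)) ^ 2 - 1)

/-- `B^I_k`. -/
noncomputable def BIseq (c χ : ℝ) (k : ℕ) : ℝ :=
  4 * (4 * (k : ℝ) + 1) * (4 * (k : ℝ) + 3) ^ 2 /
      (4 * (k : ℝ) * (4 * (k : ℝ) - 2) * (4 * (k : ℝ) + 7)) *
    ((χ - c ^ 2 - 2 * (k : ℝ) * (2 * (k : ℝ) + 1)) / c ^ 2)

/-- `B^{II}_k`. -/
noncomputable def BIIseq (k : ℕ) : ℝ :=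
  2 + 60 / (32 * (k : ℝ) ^ 4 + 32 * (k : ℝ) ^ 3 - 38 * (k : ℝ) ^ 2 + 7 * (k : ℝ))

/-- `σ_k`. -/
noncomputable def sigmaSeq (c χ : ℝ) (k : ℕ) : ℝ :=
  (BIseq c χ k + BIIseq k) / 2 +
    Real.sqrt (((BIseq c χ k + BIIseq k) / 2) ^ 2 - 1)

/-!
Where `4x² ≤ χ - c²`, `log g(x)` is the `arcosh` of `1 + 2 (χ - c² - 4x²) / c²`; extended by zero
it is nonnegative and antitone on `[0, ∞)`. Since `B^I_k ≥ 4 (χ - c² - 2k(2k + 1)) / c²`,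
`B^{II}_k ≥ 2` and `2k(2k + 1) ≤ 4 (k + 1/2)²`, we have `log g(k + 1/2) ≤ log σ_k`, so the sum of
`log σ_k` over `2 ≤ k < k₀` dominates the integral over `[5/2, k₀ + 1/2]`. Maximality of `k₀` forces
`√(χ - c²) / 2 ≤ k₀ + 3/2`, so what remains of the integral has total length at most
`5/2 + 1 < 4`, and there the integrand is at most `log g(0)`.
-/

section AntitoneIntegral

open Set MeasureTheory intervalIntegral

variable {f : ℝ → ℝ}

lemma intervalIntegrable_of_antitoneOn_Ici {l a b : ℝ} (hf : AntitoneOn f (Ici l)) (ha : l ≤ a)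
    (hb : l ≤ b) : IntervalIntegrable f volume a b :=
  (hf.mono fun _ hx => (le_inf ha hb).trans hx.1).intervalIntegrable

lemma integral_le_mul_of_antitoneOn_Ici {l a b : ℝ} (hf : AntitoneOn f (Ici l)) (ha : l ≤ a)
    (hab : a ≤ b) : ∫ x in a..b, f x ≤ (b - a) * f l :=
  calc ∫ x in a..b, f x ≤ ∫ _ in a..b, f l :=
        integral_mono_on hab (intervalIntegrable_of_antitoneOn_Ici hf ha (ha.trans hab))
          intervalIntegrable_const fun _ hx =>
            hf self_mem_Ici (ha.trans hx.1) (ha.trans hx.1)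
    _ = (b - a) * f l := by rw [intervalIntegral.integral_const, smul_eq_mul]

lemma integral_le_sum_Ico_add_of_antitoneOn {s : ℝ} {m n : ℕ} (hmn : m ≤ n)
    (hf : AntitoneOn f (Icc (m + s) (n + s))) :
    ∫ x in (m + s : ℝ)..(n + s), f x ≤ ∑ k ∈ Finset.Ico m n, f (k + s) := by
  have hshift : AntitoneOn (fun x => f (x + s)) (Icc (m : ℝ) n) := fun x hx y hy hxy =>
    hf ⟨by linarith [hx.1], by linarith [hx.2]⟩ ⟨by linarith [hy.1], by linarith [hy.2]⟩
      (by linarith)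
  rw [← integral_comp_add_right]
  exact hshift.integral_le_sum_Ico hmn

lemma integral_le_mul_add_sum_Ico_of_antitoneOn {b s r : ℝ} {m n : ℕ}
    (hf : AntitoneOn f (Ici 0)) (hf₀ : ∀ x, 0 ≤ x → 0 ≤ f x) (hb : 0 ≤ b) (hs : 0 ≤ s) (hr : 0 ≤ r)
    (hmn : m ≤ n) (hbn : b ≤ n + s + r) :
    ∫ x in 0..b, f x ≤ (m + s + r) * f 0 + ∑ k ∈ Finset.Ico m n, f (k + s) := by
  have hm : (0 : ℝ) ≤ m + s := by positivity
  have hn : (0 : ℝ) ≤ n + s := by positivity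
  have hnr : (0 : ℝ) ≤ n + s + r := by positivity
  have hint {u v : ℝ} (hu : 0 ≤ u) (hv : 0 ≤ v) : IntervalIntegrable f volume u v :=
    intervalIntegrable_of_antitoneOn_Ici hf hu hv
  have hextend : ∫ x in 0..b, f x ≤ ∫ x in (0 : ℝ)..(n + s + r), f x :=
    integral_mono_interval le_rfl hb hbn
      (ae_restrict_of_forall_mem measurableSet_Ioc fun x hx => hf₀ x hx.1.le) (hint le_rfl hnr)
  have hsplit : ∫ x in (0 : ℝ)..(n + s + r), f x = (∫ x in (0 : ℝ)..(m + s), f x) +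
      (∫ x in (m + s : ℝ)..(n + s), f x) + ∫ x in (n + s : ℝ)..(n + s + r), f x := by
    rw [integral_add_adjacent_intervals (hint le_rfl hm) (hint hm hn),
      integral_add_adjacent_intervals (hint le_rfl hn) (hint hn hnr)]
  have hleft : ∫ x in (0 : ℝ)..(m + s), f x ≤ (m + s - 0) * f 0 :=
    integral_le_mul_of_antitoneOn_Ici hf le_rfl hm
  have hmid : ∫ x in (m + s : ℝ)..(n + s), f x ≤ ∑ k ∈ Finset.Ico m n, f (k + s) :=
    integral_le_sum_Ico_add_of_antitoneOn hmn (hf.mono fun _ hx => hm.trans hx.1)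
  have hright : ∫ x in (n + s : ℝ)..(n + s + r), f x ≤ (n + s + r - (n + s)) * f 0 :=
    integral_le_mul_of_antitoneOn_Ici hf hn (by linarith)
  linarith

end AntitoneIntegral

section LogG

variable {c χ x : ℝ}

/-- The quantity `t(x)` for which `g(x) = t(x) + √(t(x)² - 1)`, so that
`log g(x) = arcosh (t(x))` as long as `t(x) ≥ 1`. -/
noncomputable def gArg (c χ x : ℝ) : ℝ :=
  1 + 2 * ((χ - c ^ 2) / c ^ 2 - (2 * x / c) ^ 2)

/-- `log g`, extended by zero past the zero of `χ - c² - 4x²`. The truncation `max 1` keeps the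
argument in `[1, ∞)`, where `arcosh` is nonnegative and monotone. -/
noncomputable def logG (c χ x : ℝ) : ℝ :=
  arcosh (max 1 (gArg c χ x))

lemma gArg_eq (c χ x : ℝ) : gArg c χ x = 1 + 2 * ((χ - c ^ 2 - 4 * x ^ 2) / c ^ 2) := by
  rw [gArg]
  ring

lemma antitoneOn_gArg (c χ : ℝ) : AntitoneOn (gArg c χ) (Set.Ici 0) := by
  intro x (hx : 0 ≤ x) y _ hxy
  rw [gArg_eq, gArg_eq]
  gcongr

lemma one_le_gArg (hx : 4 * x ^ 2 ≤ χ - c ^ 2) : 1 ≤ gArg c χ x := by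
  have : 0 ≤ (χ - c ^ 2 - 4 * x ^ 2) / c ^ 2 := div_nonneg (by linarith) (sq_nonneg c)
  rw [gArg_eq]
  linarith

lemma monotone_arcosh_max_one : Monotone fun t : ℝ => arcosh (max 1 t) := fun a b hab =>
  (arcosh_le_arcosh (by positivity) (by positivity)).2 (max_le_max_left 1 hab)

lemma antitoneOn_logG (c χ : ℝ) : AntitoneOn (logG c χ) (Set.Ici 0) :=
  monotone_arcosh_max_one.comp_antitoneOn (antitoneOn_gArg c χ)

lemma logG_nonneg (c χ x : ℝ) : 0 ≤ logG c χ x :=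
  arcosh_nonneg (le_max_left _ _)

lemma logG_zero_pos (hc : c ≠ 0) (hχ : c ^ 2 < χ) : 0 < logG c χ 0 := by
  have hpos : 0 < (χ - c ^ 2 - 4 * 0 ^ 2) / c ^ 2 := div_pos (by linarith) (by positivity)
  have hone : 1 < gArg c χ 0 := by
    rw [gArg_eq]
    linarith
  exact arcosh_pos (lt_max_of_lt_right hone)

lemma exp_logG (hx : 4 * x ^ 2 ≤ χ - c ^ 2) : exp (logG c χ x) = gFun c χ x := by
  rw [logG, max_eq_right (one_le_gArg hx), exp_arcosh (one_le_gArg hx), gArg, gFun]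

lemma log_gFun (hx : 4 * x ^ 2 ≤ χ - c ^ 2) : log (gFun c χ x) = logG c χ x := by
  rw [← exp_logG hx, log_exp]

lemma gFun_zpow (hx : 4 * x ^ 2 ≤ χ - c ^ 2) (z : ℤ) :
    gFun c χ x ^ z = exp (z * logG c χ x) := by
  rw [← exp_logG hx, ← rpow_intCast, ← exp_mul, mul_comm]

lemma integral_log_gFun (hχ : c ^ 2 ≤ χ) :
    ∫ x in (0 : ℝ)..(√(χ - c ^ 2) / 2), log (gFun c χ x) =
      ∫ x in (0 : ℝ)..(√(χ - c ^ 2) / 2), logG c χ x := by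
  refine intervalIntegral.integral_congr fun x hx => log_gFun ?_
  rw [Set.uIcc_of_le (by positivity)] at hx
  calc 4 * x ^ 2 = (2 * x) ^ 2 := by ring
    _ ≤ √(χ - c ^ 2) ^ 2 := pow_le_pow_left₀ (by linarith [hx.1]) (by linarith [hx.2]) 2
    _ = χ - c ^ 2 := sq_sqrt (sub_nonneg.2 hχ)

end LogG

section Sigma

variable {c χ : ℝ} {k : ℕ}

lemma four_mul_le_BIseq (hk : 1 ≤ k) (hkχ : 2 * (k : ℝ) * (2 * k + 1) ≤ χ - c ^ 2) :
    4 * ((χ - c ^ 2 - 2 * k * (2 * k + 1)) / c ^ 2) ≤ BIseq c χ k := by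
  have hk' : (1 : ℝ) ≤ k := by exact_mod_cast hk
  have hden : 0 < 4 * (k : ℝ) * (4 * k - 2) * (4 * k + 7) :=
    mul_pos (mul_pos (by linarith) (by linarith)) (by linarith)
  refine mul_le_mul_of_nonneg_right ?_ (div_nonneg (by linarith) (sq_nonneg c))
  rw [le_div_iff₀ hden]
  nlinarith

lemma two_le_BIIseq (hk : 1 ≤ k) : 2 ≤ BIIseq k := by
  have hk' : (0 : ℝ) ≤ k - 1 := sub_nonneg.2 (by exact_mod_cast hk)
  have hden : 32 * (k : ℝ) ^ 4 + 32 * k ^ 3 - 38 * k ^ 2 + 7 * k =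
      32 * k ^ 3 * (k - 1) + 64 * k ^ 2 * (k - 1) + 26 * k ^ 2 + 7 * k := by ring
  rw [BIIseq, hden]
  exact le_add_of_nonneg_right (by positivity)

lemma one_add_two_mul_le_BIseq_add_BIIseq_div_two (hk : 1 ≤ k)
    (hkχ : 2 * (k : ℝ) * (2 * k + 1) ≤ χ - c ^ 2) :
    1 + 2 * ((χ - c ^ 2 - 2 * k * (2 * k + 1)) / c ^ 2) ≤ (BIseq c χ k + BIIseq k) / 2 := by
  linarith [four_mul_le_BIseq hk hkχ, two_le_BIIseq hk]

lemma one_le_BIseq_add_BIIseq_div_two (hk : 1 ≤ k)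
    (hkχ : 2 * (k : ℝ) * (2 * k + 1) ≤ χ - c ^ 2) : 1 ≤ (BIseq c χ k + BIIseq k) / 2 := by
  have : 0 ≤ (χ - c ^ 2 - 2 * k * (2 * k + 1)) / c ^ 2 :=
    div_nonneg (by linarith) (sq_nonneg c)
  linarith [one_add_two_mul_le_BIseq_add_BIIseq_div_two hk hkχ]

lemma gArg_add_half_le_BIseq_add_BIIseq_div_two (hk : 1 ≤ k)
    (hkχ : 2 * (k : ℝ) * (2 * k + 1) ≤ χ - c ^ 2) :
    gArg c χ (k + 1 / 2) ≤ (BIseq c χ k + BIIseq k) / 2 := by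
  refine le_trans ?_ (one_add_two_mul_le_BIseq_add_BIIseq_div_two hk hkχ)
  have hsq : 2 * (k : ℝ) * (2 * k + 1) ≤ 4 * (k + 1 / 2) ^ 2 := by nlinarith
  rw [gArg_eq]
  gcongr 1 + 2 * ((_ - ?_) / _)

lemma exp_logG_add_half_le_sigmaSeq (hk : 1 ≤ k)
    (hkχ : 2 * (k : ℝ) * (2 * k + 1) ≤ χ - c ^ 2) :
    exp (logG c χ (k + 1 / 2)) ≤ sigmaSeq c χ k := by
  have hone : 1 ≤ (BIseq c χ k + BIIseq k) / 2 := one_le_BIseq_add_BIIseq_div_two hk hkχ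
  rw [sigmaSeq, ← exp_arcosh hone, exp_le_exp]
  exact (arcosh_le_arcosh (by positivity) (by positivity)).2
    (max_le hone (gArg_add_half_le_BIseq_add_BIIseq_div_two hk hkχ))

lemma exp_sum_logG_le_prod_sigmaSeq {m n : ℕ} (hm : 1 ≤ m)
    (hn : 2 * (n : ℝ) * (2 * n + 1) ≤ χ - c ^ 2) :
    exp (∑ k ∈ Finset.Ico m n, logG c χ (k + 1 / 2)) ≤ ∏ k ∈ Finset.Ico m n, sigmaSeq c χ k := by
  rw [exp_sum]
  refine Finset.prod_le_prod (fun _ _ => (exp_pos _).le) fun k hk => ?_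
  obtain ⟨hmk, hkn⟩ := Finset.mem_Ico.1 hk
  refine exp_logG_add_half_le_sigmaSeq (hm.trans hmk) (le_trans ?_ hn)
  gcongr

end Sigma

section Main

lemma sqrt_div_two_le_of_le {M n : ℝ} (hn : 0 ≤ n) (hM : M ≤ 2 * (n + 1) * (2 * (n + 1) + 1)) :
    √M / 2 ≤ n + 1 / 2 + 1 := by
  have hsqrt : √M ≤ 2 * n + 3 := sqrt_le_iff.2 ⟨by positivity, by nlinarith⟩
  linarith

variable {c χ : ℝ}

lemma integral_log_gFun_le_mul_add_sum {n : ℕ} (hχ : c ^ 2 ≤ χ) (hn : 2 ≤ n)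
    (hχn : χ - c ^ 2 ≤ 2 * ((n : ℝ) + 1) * (2 * (n + 1) + 1)) :
    ∫ x in (0 : ℝ)..(√(χ - c ^ 2) / 2), log (gFun c χ x) ≤
      7 / 2 * logG c χ 0 + ∑ k ∈ Finset.Ico 2 n, logG c χ (k + 1 / 2) := by
  have hlength : ((2 : ℕ) + 1 / 2 + 1 : ℝ) = 7 / 2 := by norm_num
  rw [integral_log_gFun hχ, ← hlength]
  exact integral_le_mul_add_sum_Ico_of_antitoneOn (antitoneOn_logG c χ)
    (fun x _ => logG_nonneg c χ x) (by positivity) (by norm_num) zero_le_one hn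
    (sqrt_div_two_le_of_le n.cast_nonneg hχn)

end Main

theorem stmt12 (c χ : ℝ) (hc : 0 < c) (hχ : χ > c ^ 2) (k₀ : ℕ)
    (hk₀ : IsGreatest {k : ℕ | 1 ≤ k ∧ 2 * (k : ℝ) * (2 * (k : ℝ) + 1) < χ - c ^ 2} k₀)
    (hk₀2 : 2 < k₀) :
    ∏ k ∈ Finset.Icc 2 (k₀ - 1), sigmaSeq c χ k >
      gFun c χ 0 ^ (-4 : ℤ) *
        Real.exp (∫ x in (0 : ℝ)..(Real.sqrt (χ - c ^ 2) / 2), Real.log (gFun c χ x)) := by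
  obtain ⟨⟨-, hk₀χ⟩, hmax⟩ := hk₀
  have hχk₀ : χ - c ^ 2 ≤ 2 * ((k₀ : ℝ) + 1) * (2 * (k₀ + 1) + 1) := by
    by_contra! hlt
    exact k₀.not_succ_le_self (hmax ⟨by omega, by exact_mod_cast hlt⟩)
  have hintegral := integral_log_gFun_le_mul_add_sum hχ.le hk₀2.le hχk₀
  have hlogG₀ : 0 < logG c χ 0 := logG_zero_pos hc.ne' hχ
  calc gFun c χ 0 ^ (-4 : ℤ) * exp (∫ x in (0 : ℝ)..(√(χ - c ^ 2) / 2), log (gFun c χ x))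
      = exp (-4 * logG c χ 0 + ∫ x in (0 : ℝ)..(√(χ - c ^ 2) / 2), log (gFun c χ x)) := by
        rw [gFun_zpow (by linarith), exp_add]
        norm_num
    _ < exp (∑ k ∈ Finset.Ico 2 k₀, logG c χ (k + 1 / 2)) := exp_lt_exp.2 (by linarith)
    _ ≤ ∏ k ∈ Finset.Ico 2 k₀, sigmaSeq c χ k :=
        exp_sum_logG_le_prod_sigmaSeq one_le_two hk₀χ.le
    _ = ∏ k ∈ Finset.Icc 2 (k₀ - 1), sigmaSeq c χ k := by
        rw [Finset.Icc_sub_one_right_eq_Ico_of_not_isMin (not_isMin_of_lt hk₀2)]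
end

section
/- Let c > 0 and χ be real numbers with χ > c². Then r₂ > B^I₂ + B^{II}₂. Moreover, if B^I₂ + B^{II}₂ > 2, then σ₂ > 0 and r₂ > σ₂. -/
open Real

/-- The sequence `γ_k`. -/
noncomputable def gammaSeq (c χ : ℝ) : ℕ → ℝ
  | 0 => 0
  | 1 => Real.sqrt 2
  | 2 => 8 / (7 * Real.sqrt 2) * (2 + 3 * (χ - c ^ 2) / c ^ 2)
  | 3 => 16 * Real.sqrt 2 / 11 *
      (3 + 15 * (χ - c ^ 2) / c ^ 2 +
        105 / 8 * ((χ - c ^ 2) / c ^ 2) * ((χ - c ^ 2 - 6) / c ^ 2) - 105 / (2 * c ^ 2))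
  | (k + 4) =>
      (BIseq c χ (k + 2) + BIIseq (k + 2)) * gammaSeq c χ (k + 3) - gammaSeq c χ (k + 2)

/-- `r_k = γ_{k+1}/γ_k`. -/
noncomputable def rSeq (c χ : ℝ) (k : ℕ) : ℝ := gammaSeq c χ (k + 1) / gammaSeq c χ k

/-!
Put `a = (χ - c²) / c²`, so that `a > 0`. Both sides of the first inequality are then a function
of `a` minus a multiple of `1 / c²`:
`B^I₂ + B^{II}₂ = (121/20 a + 44/21) - 121 / c²` and
`r₂ = 28/11 (3 + 15 a + 105/8 a²) / (2 + 3 a) - (735/11) / c²`,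
and the inequality holds for the two parts separately. For the second claim, `σ₂` is the larger
root of `x² - B x + 1` with `B = B^I₂ + B^{II}₂`; for `B > 2` both roots are positive with sum `B`,
so `0 < σ₂ < B < r₂`.
-/

/-- The relative excess `(χ - c²) / c²` of `χ` over `c²`: the initial values `γ₂`, `γ₃` and the
coefficients `B^I_k` are polynomials in it and in `1 / c²`. -/
noncomputable def relExcess (c χ : ℝ) : ℝ := (χ - c ^ 2) / c ^ 2

section

variable {c χ : ℝ} {k : ℕ}

theorem relExcess_nonneg (h : c ^ 2 ≤ χ) : 0 ≤ relExcess c χ :=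
  div_nonneg (sub_nonneg.2 h) (sq_nonneg c)

theorem sigmaSeq_pos (hB : 0 < BIseq c χ k + BIIseq k) : 0 < sigmaSeq c χ k :=
  add_pos_of_pos_of_nonneg (half_pos hB) (sqrt_nonneg _)

theorem sigmaSeq_le (hB : 0 ≤ BIseq c χ k + BIIseq k) :
    sigmaSeq c χ k ≤ BIseq c χ k + BIIseq k := by
  rw [sigmaSeq]
  set B := BIseq c χ k + BIIseq k
  calc B / 2 + √((B / 2) ^ 2 - 1)
      ≤ B / 2 + √((B / 2) ^ 2) := by gcongr; linarith
    _ = B := by rw [sqrt_sq (div_nonneg hB zero_le_two), add_halves]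

theorem BIseq_two_add_BIIseq_two (c χ : ℝ) :
    BIseq c χ 2 + BIIseq 2 = 121 / 20 * relExcess c χ + 44 / 21 - 121 / c ^ 2 := by
  rw [BIseq, BIIseq, relExcess]
  push_cast
  ring

theorem gammaSeq_two (c χ : ℝ) :
    gammaSeq c χ 2 = 8 / (7 * √2) * (2 + 3 * relExcess c χ) := by
  rw [gammaSeq, relExcess, mul_div_assoc]

theorem gammaSeq_three (c χ : ℝ) :
    gammaSeq c χ 3 = 16 * √2 / 11 *
      (3 + 15 * relExcess c χ + 105 / 8 * relExcess c χ ^ 2 -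
        105 / 4 * (2 + 3 * relExcess c χ) / c ^ 2) := by
  rw [gammaSeq, relExcess]
  ring

theorem rSeq_two (h : 2 + 3 * relExcess c χ ≠ 0) :
    rSeq c χ 2 =
      28 / 11 * (3 + 15 * relExcess c χ + 105 / 8 * relExcess c χ ^ 2) / (2 + 3 * relExcess c χ) -
        735 / 11 / c ^ 2 := by
  have sqrt_two_sq : √2 ^ 2 = 2 := sq_sqrt zero_le_two
  rw [rSeq, gammaSeq_two, gammaSeq_three]
  generalize relExcess c χ = a at h ⊢
  calc _ = 14 / 11 * √2 ^ 2 * (3 + 15 * a + 105 / 8 * a ^ 2 -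
        105 / 4 * (2 + 3 * a) / c ^ 2) / (2 + 3 * a) := by field_simp; ring
    _ = 28 / 11 * (3 + 15 * a + 105 / 8 * a ^ 2) / (2 + 3 * a) -
        735 / 11 / c ^ 2 * ((2 + 3 * a) / (2 + 3 * a)) := by rw [sqrt_two_sq]; ring
    _ = _ := by rw [div_self h, mul_one]

theorem linear_lt_quadratic_div_linear {a : ℝ} (ha : 0 ≤ a) :
    121 / 20 * a + 44 / 21 < 28 / 11 * (3 + 15 * a + 105 / 8 * a ^ 2) / (2 + 3 * a) := by
  have hpos : 0 < 796 / 231 + 15243 / 770 * a + 3357 / 220 * a ^ 2 := by positivity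
  rw [lt_div_iff₀ (by positivity)]
  linarith

theorem BIseq_two_add_BIIseq_two_lt_rSeq_two (h : c ^ 2 ≤ χ) :
    BIseq c χ 2 + BIIseq 2 < rSeq c χ 2 := by
  have ha : 0 ≤ relExcess c χ := relExcess_nonneg h
  rw [BIseq_two_add_BIIseq_two, rSeq_two (by positivity)]
  have hc_terms : 735 / 11 / c ^ 2 ≤ 121 / c ^ 2 := by gcongr; norm_num
  linarith [linear_lt_quadratic_div_linear ha]

end

theorem stmt14 (c χ : ℝ) (hc : 0 < c) (hχ : χ > c ^ 2) :
    rSeq c χ 2 > BIseq c χ 2 + BIIseq 2 ∧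
    (BIseq c χ 2 + BIIseq 2 > 2 →
      0 < sigmaSeq c χ 2 ∧ rSeq c χ 2 > sigmaSeq c χ 2) := by
  have hr : BIseq c χ 2 + BIIseq 2 < rSeq c χ 2 := BIseq_two_add_BIIseq_two_lt_rSeq_two hχ.le
  refine ⟨hr, fun hB => ?_⟩
  have hB_pos : 0 < BIseq c χ 2 + BIIseq 2 := two_pos.trans hB
  exact ⟨sigmaSeq_pos hB_pos, (sigmaSeq_le hB_pos.le).trans_lt hr⟩
end

section
/- Let c > 0 and χ be real numbers with χ > c² + 6, and let k₀ be the largest integer k ≥ 1 with 2k·(2k+1) < χ − c². Then: (i) A^{new}_k = ((4k−4)/(4k+4))·((4k−6)/(4k+2))·((4k+7)/(4k−1)) for every k ≥ 1; (ii) 0 = A^{new}₁ < A^{new}₂ < A^{new}₃ < ⋯, and A^{new}_k < 1 for every k ≥ 1; (iii) √2 = β^{new}₁ < β^{new}₂ < ⋯ < β^{new}_{k₀} < β^{new}_{k₀+1} < β^{new}_{k₀+2}; (iv) β^{new}_k ≤ β_k for every k with 1 ≤ k ≤ k₀ + 2. -/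
open Real

/-- `A_k`. -/
noncomputable def ASeq (k : ℕ) : ℝ :=
  (k : ℝ) * (2 * (k : ℝ) - 1) * (4 * (k : ℝ) + 3) /
      (((k : ℝ) + 1) * (2 * (k : ℝ) + 1) * (4 * (k : ℝ) - 1)) *
    Real.sqrt ((4 * (k : ℝ) + 5) / (4 * (k : ℝ) - 3))

/-- `B_k`. -/
noncomputable def BSeq (c χ : ℝ) (k : ℕ) : ℝ :=
  (χ - 2 * (k : ℝ) * (2 * (k : ℝ) + 1)) / c ^ 2 *
      ((4 * (k : ℝ) + 3) * Real.sqrt ((4 * (k : ℝ) + 1) * (4 * (k : ℝ) + 5))) /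
      ((2 * (k : ℝ) + 1) * (2 * (k : ℝ) + 2)) -
    (4 * (k : ℝ) * (2 * (k : ℝ) + 1) - 1) * Real.sqrt ((4 * (k : ℝ) + 1) * (4 * (k : ℝ) + 5)) /
      ((4 * (k : ℝ) - 1) * (2 * (k : ℝ) + 1) * (2 * (k : ℝ) + 2))

/-- The sequence `α_k`. -/
noncomputable def alphaSeq (c χ : ℝ) : ℕ → ℝ
  | 0 => 0
  | 1 => 1
  | 2 => BSeq c χ 0
  | (k + 3) => BSeq c χ (k + 1) * alphaSeq c χ (k + 2) - ASeq (k + 1) * alphaSeq c χ (k + 1)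

/-- The sequence `β_k = α_k·√(2/(4k−3))`. -/
noncomputable def betaSeq (c χ : ℝ) (k : ℕ) : ℝ :=
  alphaSeq c χ k * Real.sqrt (2 / (4 * (k : ℝ) - 3))

/-- `Ã_k`. -/
noncomputable def AtildeSeq (k : ℕ) : ℝ :=
  (k : ℝ) * (2 * (k : ℝ) - 1) * (4 * (k : ℝ) + 3) /
    (((k : ℝ) + 1) * (2 * (k : ℝ) + 1) * (4 * (k : ℝ) - 1))

/-- `ρ_k`. -/
noncomputable def rhoSeq (k : ℕ) : ℝ :=
  (4 * (k : ℝ) - 6) * (4 * (k : ℝ) - 4) * (4 * (k : ℝ) + 7) /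
    ((4 * (k : ℝ) - 2) * (4 * (k : ℝ)) * (4 * (k : ℝ) + 3))

/-- `A^{new}_k = Ã_k·ρ_k`. -/
noncomputable def AnewSeq (k : ℕ) : ℝ := AtildeSeq k * rhoSeq k

/-- `B^χ_k`. -/
noncomputable def BchiSeq (c χ : ℝ) (k : ℕ) : ℝ :=
  (4 * (k : ℝ) + 1) * (4 * (k : ℝ) + 3) / ((2 * (k : ℝ) + 1) * (2 * (k : ℝ) + 2)) *
    ((χ - c ^ 2 - 2 * (k : ℝ) * (2 * (k : ℝ) + 1)) / c ^ 2)

/-- The sequence `β^{new}_k`. -/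
noncomputable def betaNewSeq (c χ : ℝ) : ℕ → ℝ
  | 0 => 0
  | 1 => betaSeq c χ 1
  | 2 => betaSeq c χ 2
  | 3 => betaSeq c χ 3
  | (k + 4) =>
      (BchiSeq c χ (k + 2) + 1) * betaNewSeq c χ (k + 3) +
        AnewSeq (k + 2) * (betaNewSeq c χ (k + 3) - betaNewSeq c χ (k + 2))

/-!
In terms of the increments `Δu k = u (k + 1) - u k`, both `β` and `β^{new}` satisfy
`Δu (k + 1) = B^χ_k * u (k + 1) + a k * Δu k`, with `a = Ã` for `β` and `a = A^{new}` (except at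
`k = 1`) for `β^{new}`. Up to `k₀` the coefficients `B^χ_k` are positive, so `β^{new}` stays
nonnegative and increases; since `0 ≤ A^{new} ≤ Ã`, its increments never exceed those of `β`.
The conventions `β₀ = β^{new}₀ = 0` extend both recurrences to `k = 0`, because `Ã₀ = 0`.
-/

/-- The sequence `u` solves the second-order linear recurrence whose increments at consecutive
indices are related by the coefficients `a` and `b`. This form makes positivity and comparison of
solutions with different `a` visible term by term. -/
def IsIncrementRecurrence {R : Type*} [Ring R] (a b u : ℕ → R) : Prop :=
  ∀ k, u (k + 2) - u (k + 1) = b k * u (k + 1) + a k * (u (k + 1) - u k)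

namespace IsIncrementRecurrence

variable {R : Type*} [Ring R] [PartialOrder R] {a a' b u v : ℕ → R} {n : ℕ}

theorem nonneg_and_lt_succ [IsStrictOrderedRing R] (hu : IsIncrementRecurrence a b u)
    (ha : ∀ k < n, 0 ≤ a k) (hb : ∀ k < n, 0 < b k) (hu₀ : 0 ≤ u 0) (hu₁ : u 0 < u 1) :
    ∀ k ≤ n, 0 ≤ u k ∧ u k < u (k + 1) := by
  intro k hk
  induction k with
  | zero => exact ⟨hu₀, hu₁⟩
  | succ k ih =>
    obtain ⟨hnonneg, hlt⟩ := ih (by omega)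
    have hpos : 0 < u (k + 1) := hnonneg.trans_lt hlt
    refine ⟨hpos.le, sub_pos.mp ?_⟩
    rw [hu k]
    exact add_pos_of_pos_of_nonneg (mul_pos (hb k hk) hpos)
      (mul_nonneg (ha k hk) (sub_nonneg.mpr hlt.le))

theorem sub_le_sub_and_succ_le_succ [IsOrderedRing R] (hu : IsIncrementRecurrence a b u)
    (hv : IsIncrementRecurrence a' b v) (ha' : ∀ k < n, 0 ≤ a' k) (haa' : ∀ k < n, a k ≤ a' k)
    (hb : ∀ k < n, 0 ≤ b k) (hmono : ∀ k < n, u k ≤ u (k + 1)) (h₀ : u 0 ≤ v 0)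
    (h₁ : u 1 - u 0 ≤ v 1 - v 0) :
    ∀ k ≤ n, u (k + 1) - u k ≤ v (k + 1) - v k ∧ u (k + 1) ≤ v (k + 1) := by
  intro k hk
  induction k with
  | zero => exact ⟨h₁, by simpa using add_le_add h₁ h₀⟩
  | succ k ih =>
    obtain ⟨hsub, hle⟩ := ih (by omega)
    have hsub_succ : u (k + 2) - u (k + 1) ≤ v (k + 2) - v (k + 1) := by
      rw [hu k, hv k]
      exact add_le_add (mul_le_mul_of_nonneg_left hle (hb k hk))
        (mul_le_mul (haa' k hk) hsub (sub_nonneg.mpr (hmono k hk)) (ha' k hk))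
    exact ⟨hsub_succ, by simpa using add_le_add hsub_succ hle⟩

theorem le [IsOrderedRing R] (hu : IsIncrementRecurrence a b u)
    (hv : IsIncrementRecurrence a' b v) (ha' : ∀ k < n, 0 ≤ a' k) (haa' : ∀ k < n, a k ≤ a' k)
    (hb : ∀ k < n, 0 ≤ b k) (hmono : ∀ k < n, u k ≤ u (k + 1)) (h₀ : u 0 ≤ v 0)
    (h₁ : u 1 - u 0 ≤ v 1 - v 0) :
    ∀ k ≤ n + 1, u k ≤ v k
  | 0, _ => h₀
  | k + 1, hk =>
    (hu.sub_le_sub_and_succ_le_succ hv ha' haa' hb hmono h₀ h₁ k (Nat.le_of_succ_le_succ hk)).2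

end IsIncrementRecurrence

section Coefficients

variable {c χ : ℝ} {k : ℕ}

theorem anewSeq_eq (hk : 1 ≤ k) :
    AnewSeq k =
      (4 * (k : ℝ) - 4) / (4 * (k : ℝ) + 4) * ((4 * (k : ℝ) - 6) / (4 * (k : ℝ) + 2)) *
        ((4 * (k : ℝ) + 7) / (4 * (k : ℝ) - 1)) := by
  obtain ⟨m, rfl⟩ := Nat.exists_eq_add_of_le' hk
  have h₁ : 2 * ((m + 1 : ℕ) : ℝ) - 1 = 2 * m + 1 := by push_cast; ring
  have h₂ : 4 * ((m + 1 : ℕ) : ℝ) - 1 = 4 * m + 3 := by push_cast; ring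
  have h₃ : 4 * ((m + 1 : ℕ) : ℝ) - 2 = 2 * (2 * m + 1) := by push_cast; ring
  rw [AnewSeq, AtildeSeq, rhoSeq, h₁, h₂, h₃]
  field_simp
  ring

theorem anewSeq_add_one (m : ℕ) :
    AnewSeq (m + 1) =
      m * (2 * m - 1) * (4 * m + 11) / ((m + 2) * (2 * m + 3) * (4 * m + 3)) := by
  have h : 4 * ((m : ℝ) + 1) - 1 = 4 * m + 3 := by ring
  rw [anewSeq_eq (Nat.le_add_left 1 m)]
  push_cast
  rw [h]
  field_simp
  ring

theorem anewSeq_zero : AnewSeq 0 = 0 := by simp [AnewSeq, AtildeSeq]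

theorem anewSeq_one : AnewSeq 1 = 0 := by simp [AnewSeq, rhoSeq]

theorem anewSeq_lt_succ (hk : 1 ≤ k) : AnewSeq k < AnewSeq (k + 1) := by
  obtain ⟨m, rfl⟩ := Nat.exists_eq_add_of_le' hk
  rw [anewSeq_add_one, anewSeq_add_one, div_lt_div_iff₀ (by positivity) (by positivity),
    ← sub_pos]
  push_cast
  ring_nf
  positivity

theorem anewSeq_lt_one (hk : 1 ≤ k) : AnewSeq k < 1 := by
  obtain ⟨m, rfl⟩ := Nat.exists_eq_add_of_le' hk
  rw [anewSeq_add_one, div_lt_one (by positivity), ← sub_pos]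
  ring_nf
  positivity

theorem anewSeq_nonneg (k : ℕ) : 0 ≤ AnewSeq k := by
  rcases k.eq_zero_or_pos with rfl | hk
  · exact anewSeq_zero.ge
  · exact Nat.le_induction anewSeq_one.ge (fun k hk ih ↦ ih.trans (anewSeq_lt_succ hk).le) k hk

theorem atildeSeq_nonneg (k : ℕ) : 0 ≤ AtildeSeq k := by
  rcases k.eq_zero_or_pos with rfl | hk
  · simp [AtildeSeq]
  · have hk' : (1 : ℝ) ≤ k := by exact_mod_cast hk
    have : 0 ≤ 2 * (k : ℝ) - 1 := by linarith
    have : 0 ≤ 4 * (k : ℝ) - 1 := by linarith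
    unfold AtildeSeq
    positivity

theorem rhoSeq_le_one (k : ℕ) : rhoSeq k ≤ 1 := by
  rcases k.eq_zero_or_pos with rfl | hk
  · simp [rhoSeq]
  · have hk' : (1 : ℝ) ≤ k := by exact_mod_cast hk
    have : 0 < 4 * (k : ℝ) - 2 := by linarith
    rw [rhoSeq, div_le_one (by positivity)]
    nlinarith

theorem anewSeq_le_atildeSeq (k : ℕ) : AnewSeq k ≤ AtildeSeq k :=
  mul_le_of_le_one_right (atildeSeq_nonneg k) (rhoSeq_le_one k)

theorem bchiSeq_pos (hc : c ≠ 0) (hk : 2 * (k : ℝ) * (2 * (k : ℝ) + 1) < χ - c ^ 2) :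
    0 < BchiSeq c χ k := by
  have : 0 < χ - c ^ 2 - 2 * (k : ℝ) * (2 * (k : ℝ) + 1) := sub_pos.mpr hk
  unfold BchiSeq
  positivity

end Coefficients

/-- The normalising factor `β_k / α_k = √(2 / (4k - 3))`. At `k = 0` the argument of the square
root is negative, so the value is `0`. -/
noncomputable def betaScale (k : ℕ) : ℝ :=
  √(2 / (4 * (k : ℝ) - 3))

theorem aSeq_mul_betaScale (k : ℕ) :
    ASeq k * betaScale (k + 2) = AtildeSeq k * betaScale k := by
  have hsqrt : √((4 * (k : ℝ) + 5) / (4 * k - 3)) * betaScale (k + 2) = betaScale k := by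
    have h : 4 * ((k + 2 : ℕ) : ℝ) - 3 = 4 * k + 5 := by push_cast; ring
    rw [betaScale, betaScale, h, ← Real.sqrt_mul' _ (by positivity)]
    congr 1
    field_simp
  rw [ASeq, AtildeSeq, mul_assoc, hsqrt]

theorem bSeq_mul_betaScale {c : ℝ} (hc : c ≠ 0) (χ : ℝ) (k : ℕ) :
    BSeq c χ k * betaScale (k + 2) =
      (BchiSeq c χ k + 1 + AtildeSeq k) * betaScale (k + 1) := by
  have hsqrt : √((4 * (k : ℝ) + 1) * (4 * k + 5)) * betaScale (k + 2) =
      (4 * k + 1) * betaScale (k + 1) := by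
    have h₁ : 4 * ((k + 1 : ℕ) : ℝ) - 3 = 4 * k + 1 := by push_cast; ring
    have h₂ : 4 * ((k + 2 : ℕ) : ℝ) - 3 = 4 * k + 5 := by push_cast; ring
    have hk : 0 ≤ 4 * (k : ℝ) + 1 := by positivity
    rw [betaScale, betaScale, h₁, h₂, ← Real.sqrt_mul' _ (by positivity),
      ← Real.sqrt_sq hk, ← Real.sqrt_mul (sq_nonneg _), Real.sqrt_sq hk]
    congr 1
    field_simp
  have hcoeff : ((χ - 2 * (k : ℝ) * (2 * k + 1)) / c ^ 2 * (4 * k + 3) /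
        ((2 * k + 1) * (2 * k + 2)) -
        (4 * k * (2 * k + 1) - 1) / ((4 * k - 1) * (2 * k + 1) * (2 * k + 2))) * (4 * k + 1) =
      BchiSeq c χ k + 1 + AtildeSeq k := by
    have h : 4 * (k : ℝ) - 1 ≠ 0 := by
      rw [sub_ne_zero]
      exact_mod_cast (by omega : 4 * k ≠ 1)
    unfold BchiSeq AtildeSeq
    generalize hd : 4 * (k : ℝ) - 1 = d at h ⊢
    field_simp
    rw [← hd]
    ring
  rw [← hcoeff, mul_assoc, ← hsqrt, BSeq]
  ring

theorem alphaSeq_add_two (c χ : ℝ) (k : ℕ) :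
    alphaSeq c χ (k + 2) = BSeq c χ k * alphaSeq c χ (k + 1) - ASeq k * alphaSeq c χ k := by
  cases k <;> simp [alphaSeq]

theorem betaSeq_zero (c χ : ℝ) : betaSeq c χ 0 = 0 := by simp [betaSeq, alphaSeq]

theorem betaSeq_one (c χ : ℝ) : betaSeq c χ 1 = √2 := by
  norm_num [betaSeq, alphaSeq]

theorem betaSeq_isIncrementRecurrence {c : ℝ} (hc : c ≠ 0) (χ : ℝ) :
    IsIncrementRecurrence AtildeSeq (BchiSeq c χ) (betaSeq c χ) := by
  intro k
  have hbeta (j : ℕ) : betaSeq c χ j = alphaSeq c χ j * betaScale j := rfl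
  rw [hbeta, hbeta, hbeta, alphaSeq_add_two]
  linear_combination alphaSeq c χ (k + 1) * bSeq_mul_betaScale hc χ k -
    alphaSeq c χ k * aSeq_mul_betaScale k

/-- The coefficient of the increments in the recurrence for `β^{new}`. It is `A^{new}_k` except at
`k = 1`, where it is `Ã₁` because `β^{new}₃` is prescribed to be `β₃`. -/
noncomputable def betaNewCoeff : ℕ → ℝ :=
  Function.update AnewSeq 1 (AtildeSeq 1)

theorem betaNewCoeff_nonneg (k : ℕ) : 0 ≤ betaNewCoeff k := by
  rcases eq_or_ne k 1 with rfl | hk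
  · simpa [betaNewCoeff] using atildeSeq_nonneg 1
  · simpa [betaNewCoeff, hk] using anewSeq_nonneg k

theorem betaNewCoeff_le_atildeSeq (k : ℕ) : betaNewCoeff k ≤ AtildeSeq k := by
  rcases eq_or_ne k 1 with rfl | hk
  · simp [betaNewCoeff]
  · simpa [betaNewCoeff, hk] using anewSeq_le_atildeSeq k

theorem betaNewSeq_one (c χ : ℝ) : betaNewSeq c χ 1 = √2 :=
  betaSeq_one c χ

theorem betaNewSeq_isIncrementRecurrence {c : ℝ} (hc : c ≠ 0) (χ : ℝ) :
    IsIncrementRecurrence betaNewCoeff (BchiSeq c χ) (betaNewSeq c χ)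
  | 0 => by
    simpa [betaNewSeq, betaNewCoeff, anewSeq_zero, AtildeSeq] using
      betaSeq_isIncrementRecurrence hc χ 0
  | 1 => by
    simpa [betaNewSeq, betaNewCoeff] using betaSeq_isIncrementRecurrence hc χ 1
  | k + 2 => by
    simp only [betaNewSeq, betaNewCoeff, ne_eq, Nat.reduceEqDiff, not_false_eq_true,
      Function.update_of_ne]
    ring

section BetaNew

variable {c χ : ℝ} {n : ℕ}

theorem bchiSeq_pos_of_lt_succ (hc : c ≠ 0)
    (hn : 2 * (n : ℝ) * (2 * (n : ℝ) + 1) < χ - c ^ 2) :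
    ∀ k < n + 1, 0 < BchiSeq c χ k := by
  intro k hk
  have hkn : (k : ℝ) ≤ n := by exact_mod_cast Nat.le_of_lt_succ hk
  refine bchiSeq_pos hc (lt_of_le_of_lt ?_ hn)
  gcongr

theorem betaNewSeq_lt_succ (hc : c ≠ 0)
    (hn : 2 * (n : ℝ) * (2 * (n : ℝ) + 1) < χ - c ^ 2) :
    ∀ k ≤ n + 1, betaNewSeq c χ k < betaNewSeq c χ (k + 1) := by
  have h₀₁ : betaNewSeq c χ 0 < betaNewSeq c χ 1 := by
    rw [betaNewSeq_one]
    exact Real.sqrt_pos.mpr two_pos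
  exact fun k hk ↦ ((betaNewSeq_isIncrementRecurrence hc χ).nonneg_and_lt_succ
    (fun k _ ↦ betaNewCoeff_nonneg k) (bchiSeq_pos_of_lt_succ hc hn) le_rfl h₀₁ k hk).2

theorem betaNewSeq_le_betaSeq (hc : c ≠ 0)
    (hn : 2 * (n : ℝ) * (2 * (n : ℝ) + 1) < χ - c ^ 2) :
    ∀ k ≤ n + 2, betaNewSeq c χ k ≤ betaSeq c χ k := by
  have h₀ : betaNewSeq c χ 0 = betaSeq c χ 0 := (betaSeq_zero c χ).symm
  have h₁ : betaNewSeq c χ 1 = betaSeq c χ 1 := rfl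
  exact (betaNewSeq_isIncrementRecurrence hc χ).le (betaSeq_isIncrementRecurrence hc χ)
    (fun k _ ↦ atildeSeq_nonneg k) (fun k _ ↦ betaNewCoeff_le_atildeSeq k)
    (fun k hk ↦ (bchiSeq_pos_of_lt_succ hc hn k hk).le)
    (fun k hk ↦ (betaNewSeq_lt_succ hc hn k hk.le).le) h₀.le (by rw [h₀, h₁])

end BetaNew

theorem stmt17 (c χ : ℝ) (hc : 0 < c) (hχ : χ > c ^ 2 + 6) (k₀ : ℕ)
    (hk₀ : IsGreatest {k : ℕ | 1 ≤ k ∧ 2 * (k : ℝ) * (2 * (k : ℝ) + 1) < χ - c ^ 2} k₀) :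
    (∀ k : ℕ, 1 ≤ k →
        AnewSeq k =
          (4 * (k : ℝ) - 4) / (4 * (k : ℝ) + 4) * ((4 * (k : ℝ) - 6) / (4 * (k : ℝ) + 2)) *
            ((4 * (k : ℝ) + 7) / (4 * (k : ℝ) - 1))) ∧
    (AnewSeq 1 = 0 ∧
      (∀ k : ℕ, 1 ≤ k → AnewSeq k < AnewSeq (k + 1)) ∧
      (∀ k : ℕ, 1 ≤ k → AnewSeq k < 1)) ∧
    (betaNewSeq c χ 1 = Real.sqrt 2 ∧
      ∀ k : ℕ, 1 ≤ k → k ≤ k₀ + 1 → betaNewSeq c χ k < betaNewSeq c χ (k + 1)) ∧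
    (∀ k : ℕ, 1 ≤ k → k ≤ k₀ + 2 → betaNewSeq c χ k ≤ betaSeq c χ k) := by
  obtain ⟨⟨-, hk₀_lt⟩, -⟩ := hk₀
  exact ⟨fun _ ↦ anewSeq_eq,
    ⟨anewSeq_one, fun _ ↦ anewSeq_lt_succ, fun _ ↦ anewSeq_lt_one⟩,
    ⟨betaNewSeq_one c χ, fun k _ ↦ betaNewSeq_lt_succ hc.ne' hk₀_lt k⟩,
    fun k _ ↦ betaNewSeq_le_betaSeq hc.ne' hk₀_lt k⟩
end
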